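/- Let α ∈ ℝ with α > 1, and let U = {(x,y,z,p,q) ∈ ℝ⁵ : x > 0 and q > 0}. On U define ω₁ = dy − p dx, ω₂ = dp − q dx, ω₃ = dz − F dx with F = q z² + (1/(α²−1))·(q z² − z/x + 1/(4 q x²)), and ω₄ = (1/(2 q³ x² (α²−1))) dq − ((4α²q²x²z² − 4α²qxz + (3 − 2α²))/(4(α²−1)² x³ q²)) dx, ω₅ = −dx. Define K = 1/(2 q³ x² (α²−1)) (as a function on U), and θ₁ = ω₃ − ((4α²q²x²z² − 1)/(4 q² x² (α²−1)))·ω₂, θ₂ = ω₁, θ₃ = K^{1/3}·ω₂, θ₄ = K^{−1/3}·ω₄ + a₄₂·θ₂ + a₄₃·θ₃, θ₅ = K^{−1/3}·ω₅ + a₅₂·θ₂ + a₅₃·θ₃, where a₄₂ = 2^{1/3}·α²·(α²−9)·(4qxz(qxz−1)+1)/(60·x^{10/3}·(α²−1)^{8/3}·q²), a₄₃ = −2^{2/3}·(12α²q²x²z² − 8α²qxz − 2α² + 3)/(12·x^{5/3}·(α²−1)^{4/3}·q), a₅₂ = 2^{1/3}·(2α²−3)/(5·(α²−1)^{2/3}·x^{1/3}),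 a₅₃ = −2^{2/3}·q·x^{4/3}·(α²−1)^{2/3} (all real powers taken of positive reals). Then there exist smooth 1-forms Ω₁, …, Ω₇ on U such that Cartan's structure equations hold at every point of U: dθ₁ = θ₁∧(2Ω₁+Ω₄) + θ₂∧Ω₂ + θ₃∧θ₄; dθ₂ = θ₁∧Ω₃ + θ₂∧(Ω₁+2Ω₄) + θ₃∧θ₅; dθ₃ = θ₁∧Ω₅ + θ₂∧Ω₆ + θ₃∧(Ω₁+Ω₄) + θ₄∧θ₅; dθ₄ = θ₁∧Ω₇ + (4/3)θ₃∧Ω₆ + θ₄∧Ω₁ + θ₅∧Ω₂; dθ₅ = θ₂∧Ω₇ − (4/3)θ₃∧Ω₅ + θ₄∧Ω₃ + θ₅∧Ω₄. -/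

import Mathlib

/-!
STATEMENT 14: existence of connection 1-forms Ω₁,…,Ω₇ on U = {x > 0, q > 0}
satisfying Cartan's structure equations for the coframing (θ₁,…,θ₅) adapted to
the Monge normal form of the rolling distribution.
-/

noncomputable section

open Real

/-- coordinate differentials dx, dy, dz, dp, dq on ℝ⁵ with coordinates (x,y,z,p,q) -/
def dc (i : Fin 5) : (Fin 5 → ℝ) →L[ℝ] ℝ := ContinuousLinearMap.proj i

/-- exterior derivative of a 1-form -/
def extd (ω : (Fin 5 → ℝ) → ((Fin 5 → ℝ) →L[ℝ] ℝ)) :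
    (Fin 5 → ℝ) → (Fin 5 → ℝ) → (Fin 5 → ℝ) → ℝ :=
  fun a u v => fderiv ℝ (fun x => ω x v) a u - fderiv ℝ (fun x => ω x u) a v

/-- wedge product of two 1-forms -/
def wedge (ω η : (Fin 5 → ℝ) → ((Fin 5 → ℝ) →L[ℝ] ℝ)) :
    (Fin 5 → ℝ) → (Fin 5 → ℝ) → (Fin 5 → ℝ) → ℝ :=
  fun a u v => ω a u * η a v - ω a v * η a u

/-- the open set U = {x > 0 and q > 0} -/
def U : Set (Fin 5 → ℝ) := {a | 0 < a 0 ∧ 0 < a 4}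

/-- F = qz² + (1/(α²−1))(qz² − z/x + 1/(4qx²)) -/
def F (α : ℝ) (a : Fin 5 → ℝ) : ℝ :=
  a 4 * (a 2)^2 + (1/(α^2 - 1)) * (a 4 * (a 2)^2 - a 2 / a 0 + 1/(4 * a 4 * (a 0)^2))

/-- ω₁ = dy − p dx -/
def ω₁ : (Fin 5 → ℝ) → ((Fin 5 → ℝ) →L[ℝ] ℝ) := fun a => dc 1 - a 3 • dc 0

/-- ω₂ = dp − q dx -/
def ω₂ : (Fin 5 → ℝ) → ((Fin 5 → ℝ) →L[ℝ] ℝ) := fun a => dc 3 - a 4 • dc 0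

/-- ω₃ = dz − F dx -/
def ω₃ (α : ℝ) : (Fin 5 → ℝ) → ((Fin 5 → ℝ) →L[ℝ] ℝ) := fun a => dc 2 - F α a • dc 0

/-- ω₄ = (1/(2q³x²(α²−1))) dq − ((4α²q²x²z² − 4α²qxz + (3 − 2α²))/(4(α²−1)²x³q²)) dx -/
def ω₄ (α : ℝ) : (Fin 5 → ℝ) → ((Fin 5 → ℝ) →L[ℝ] ℝ) :=
  fun a => (1/(2 * (a 4)^3 * (a 0)^2 * (α^2 - 1))) • dc 4
    - ((4*α^2*(a 4)^2*(a 0)^2*(a 2)^2 - 4*α^2*(a 4)*(a 0)*(a 2) + (3 - 2*α^2)) /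
       (4*(α^2 - 1)^2*(a 0)^3*(a 4)^2)) • dc 0

/-- ω₅ = −dx -/
def ω₅ : (Fin 5 → ℝ) → ((Fin 5 → ℝ) →L[ℝ] ℝ) := fun _ => -dc 0

/-- K = 1/(2q³x²(α²−1)) -/
def K (α : ℝ) (a : Fin 5 → ℝ) : ℝ := 1/(2 * (a 4)^3 * (a 0)^2 * (α^2 - 1))

/-- a₄₂ = 2^{1/3}·α²·(α²−9)·(4qxz(qxz−1)+1)/(60·x^{10/3}·(α²−1)^{8/3}·q²) -/
def a₄₂ (α : ℝ) (a : Fin 5 → ℝ) : ℝ :=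
  (2:ℝ)^((1:ℝ)/3) * α^2 * (α^2 - 9) * (4 * a 4 * a 0 * a 2 * (a 4 * a 0 * a 2 - 1) + 1) /
    (60 * (a 0)^((10:ℝ)/3) * (α^2 - 1)^((8:ℝ)/3) * (a 4)^2)

/-- a₄₃ = −2^{2/3}·(12α²q²x²z² − 8α²qxz − 2α² + 3)/(12·x^{5/3}·(α²−1)^{4/3}·q) -/
def a₄₃ (α : ℝ) (a : Fin 5 → ℝ) : ℝ :=
  -((2:ℝ)^((2:ℝ)/3) * (12*α^2*(a 4)^2*(a 0)^2*(a 2)^2 - 8*α^2*(a 4)*(a 0)*(a 2) - 2*α^2 + 3) /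
    (12 * (a 0)^((5:ℝ)/3) * (α^2 - 1)^((4:ℝ)/3) * a 4))

/-- a₅₂ = 2^{1/3}·(2α²−3)/(5·(α²−1)^{2/3}·x^{1/3}) -/
def a₅₂ (α : ℝ) (a : Fin 5 → ℝ) : ℝ :=
  (2:ℝ)^((1:ℝ)/3) * (2*α^2 - 3) / (5 * (α^2 - 1)^((2:ℝ)/3) * (a 0)^((1:ℝ)/3))

/-- a₅₃ = −2^{2/3}·q·x^{4/3}·(α²−1)^{2/3} -/
def a₅₃ (α : ℝ) (a : Fin 5 → ℝ) : ℝ :=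
  -((2:ℝ)^((2:ℝ)/3) * a 4 * (a 0)^((4:ℝ)/3) * (α^2 - 1)^((2:ℝ)/3))

/-- θ₁ = ω₃ − ((4α²q²x²z² − 1)/(4q²x²(α²−1)))·ω₂ -/
def θ₁ (α : ℝ) : (Fin 5 → ℝ) → ((Fin 5 → ℝ) →L[ℝ] ℝ) :=
  fun a => ω₃ α a - ((4*α^2*(a 4)^2*(a 0)^2*(a 2)^2 - 1) /
    (4*(a 4)^2*(a 0)^2*(α^2 - 1))) • ω₂ a

/-- θ₂ = ω₁ -/
def θ₂ : (Fin 5 → ℝ) → ((Fin 5 → ℝ) →L[ℝ] ℝ) := ω₁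

/-- θ₃ = K^{1/3}·ω₂ -/
def θ₃ (α : ℝ) : (Fin 5 → ℝ) → ((Fin 5 → ℝ) →L[ℝ] ℝ) :=
  fun a => ((K α a)^((1:ℝ)/3)) • ω₂ a

/-- θ₄ = K^{−1/3}·ω₄ + a₄₂·θ₂ + a₄₃·θ₃ -/
def θ₄ (α : ℝ) : (Fin 5 → ℝ) → ((Fin 5 → ℝ) →L[ℝ] ℝ) :=
  fun a => ((K α a)^(-(1:ℝ)/3)) • ω₄ α a + a₄₂ α a • θ₂ a + a₄₃ α a • θ₃ α a

/-- θ₅ = K^{−1/3}·ω₅ + a₅₂·θ₂ + a₅₃·θ₃ -/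
def θ₅ (α : ℝ) : (Fin 5 → ℝ) → ((Fin 5 → ℝ) →L[ℝ] ℝ) :=
  fun a => ((K α a)^(-(1:ℝ)/3)) • ω₅ a + a₅₂ α a • θ₂ a + a₅₃ α a • θ₃ α a

/-!
The coframe `θ₁ = ω₃ - F_q ω₂, ω₁, ω₂, ω₄, ω₅` satisfies `dω₁ = ω₂ ∧ ω₅`, `dω₂ = K⁻¹ ω₄ ∧ ω₅` and,
modulo `θ₁`, `dθ₁ = ω₂ ∧ ω₄`, where `K = F_qq`. Scaling `ω₂` by `K^{1/3}` and `ω₄`, `ω₅` by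
`K^{-1/3}` turns all three leading coefficients into `1`, and `a₅₃` absorbs the `ω₄`-component of
`d(K^{1/3})`.

In the functions `t = x^{1/3}`, `n = 1/(t⁵q)`, `w = 1 - 2qxz` and the constant `s` with
`α² = s³/2 + 1`, all coefficients are rational, and so are those of `dt`, `dn`, `dw` along the
coframe. The Leibniz rule therefore gives every `dθₖ` explicitly, comparing coefficients yields the
connection forms, and each structure equation becomes an identity of rational functions of
`s, t, n, w`.
-/

local notation "ℝ⁵" => Fin 5 → ℝ

/-- The wedge product of two covectors, i.e. `wedge` at a single point. -/
def covWedge {E : Type*} [NormedAddCommGroup E] [NormedSpace ℝ E] (φ ψ : E →L[ℝ] ℝ) : E → E → ℝ :=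
  fun u v => φ u * ψ v - φ v * ψ u

local infixl:70 " ⋏ " => covWedge

section Calculus

variable {E : Type*} [NormedAddCommGroup E] [NormedSpace ℝ E]

lemma covWedge_apply (φ ψ : E →L[ℝ] ℝ) (u v : E) : (φ ⋏ ψ) u v = φ u * ψ v - φ v * ψ u :=
  rfl

/-- The 1-form `ω` is differentiable at `a` with exterior derivative `Θ` there. The relation is to
`extd` what `HasFDerivAt` is to `fderiv`. -/
def HasExtDerivAt (ω : E → E →L[ℝ] ℝ) (Θ : E → E → ℝ) (a : E) : Prop :=
  ∃ ω' : E →L[ℝ] E →L[ℝ] ℝ, HasFDerivAt ω ω' a ∧ Θ = fun u v => ω' u v - ω' v u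

lemma hasExtDerivAt_const (φ : E →L[ℝ] ℝ) (a : E) : HasExtDerivAt (fun _ => φ) 0 a :=
  ⟨0, hasFDerivAt_const φ a, by ext u v; simp⟩

namespace HasExtDerivAt

variable {ω η : E → E →L[ℝ] ℝ} {Θ Ξ : E → E → ℝ} {f : E → ℝ} {f' : E →L[ℝ] ℝ} {a : E}

lemma add (hω : HasExtDerivAt ω Θ a) (hη : HasExtDerivAt η Ξ a) :
    HasExtDerivAt (fun b => ω b + η b) (Θ + Ξ) a := by
  obtain ⟨ω', hω, rfl⟩ := hω
  obtain ⟨η', hη, rfl⟩ := hη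
  refine ⟨ω' + η', hω.add hη, ?_⟩
  ext u v
  simp only [Pi.add_apply, add_apply]
  ring

lemma sub (hω : HasExtDerivAt ω Θ a) (hη : HasExtDerivAt η Ξ a) :
    HasExtDerivAt (fun b => ω b - η b) (Θ - Ξ) a := by
  obtain ⟨ω', hω, rfl⟩ := hω
  obtain ⟨η', hη, rfl⟩ := hη
  refine ⟨ω' - η', hω.sub hη, ?_⟩
  ext u v
  simp only [Pi.sub_apply, sub_apply]
  ring

lemma smul (hω : HasExtDerivAt ω Θ a) (hf : HasFDerivAt f f' a) :
    HasExtDerivAt (fun b => f b • ω b) (f' ⋏ ω a + f a • Θ) a := by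
  obtain ⟨ω', hω, rfl⟩ := hω
  refine ⟨_, hf.smul hω, ?_⟩
  ext u v
  simp only [covWedge, Pi.add_apply, Pi.smul_apply, add_apply, smul_apply,
    ContinuousLinearMap.smulRight_apply, smul_eq_mul]
  ring

lemma congr_deriv (h : HasExtDerivAt ω Θ a) (hΞ : Θ = Ξ) : HasExtDerivAt ω Ξ a :=
  hΞ ▸ h

lemma congr_of_eqOn {s : Set E} (h : HasExtDerivAt ω Θ a) (hs : IsOpen s) (ha : a ∈ s)
    (hη : Set.EqOn η ω s) : HasExtDerivAt η Θ a := by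
  obtain ⟨ω', hω, rfl⟩ := h
  exact ⟨ω', hω.congr_of_eventuallyEq (hη.eventuallyEq_of_mem (hs.mem_nhds ha)), rfl⟩

lemma extd_eq {ω : ℝ⁵ → ℝ⁵ →L[ℝ] ℝ} {Θ : ℝ⁵ → ℝ⁵ → ℝ} {a : ℝ⁵}
    (h : HasExtDerivAt ω Θ a) : extd ω a = Θ := by
  obtain ⟨ω', hω, rfl⟩ := h
  ext u v
  have fderiv_apply (w : ℝ⁵) : fderiv ℝ (fun b => ω b w) a = ω'.flip w := by
    simpa using (hω.clm_apply (hasFDerivAt_const w a)).fderiv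
  simp only [extd, fderiv_apply, ContinuousLinearMap.flip_apply]

end HasExtDerivAt

lemma hasFDerivAt_div {𝕜 V : Type*} [NontriviallyNormedField 𝕜] [NormedAddCommGroup V]
    [NormedSpace 𝕜 V] {f g : V → 𝕜} {f' g' : V →L[𝕜] 𝕜} {a : V} (hf : HasFDerivAt f f' a)
    (hg : HasFDerivAt g g' a) (ha : g a ≠ 0) :
    HasFDerivAt (fun b => f b / g b) ((g a ^ 2)⁻¹ • (g a • f' - f a • g')) a := by
  simp only [div_eq_mul_inv]
  refine (hf.mul ((hasDerivAt_inv ha).comp_hasFDerivAt a hg)).congr_fderiv ?_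
  ext v
  simp only [add_apply, sub_apply, smul_apply, smul_eq_mul, Function.comp_apply]
  field_simp
  ring

lemma rpow_natCast_div {x : ℝ} (hx : 0 ≤ x) (n : ℕ) (y : ℝ) :
    x ^ (n / y) = (x ^ (1 / y)) ^ n := by
  rw [← rpow_mul_natCast hx]
  congr 1
  ring

end Calculus

lemma isOpen_U : IsOpen U :=
  (isOpen_lt continuous_const (continuous_apply 0)).inter
    (isOpen_lt continuous_const (continuous_apply 4))

section MongeNormalForm

variable {α : ℝ} {a : ℝ⁵}

/-- The function `w = 1 - 2qxz`, used in place of `z`. -/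
def W (b : ℝ⁵) : ℝ := 1 - 2 * b 4 * b 0 * b 2

/-- The partial derivative `F_z`, in terms of `w`. -/
def Fz (α : ℝ) (b : ℝ⁵) : ℝ := (α ^ 2 - 1 - α ^ 2 * W b) / ((α ^ 2 - 1) * b 0)

/-- The partial derivative `F_q`, in terms of `w`; it is the coefficient of `ω₂` in `θ₁`. -/
def Fq (α : ℝ) (b : ℝ⁵) : ℝ :=
  (α ^ 2 * (1 - W b) ^ 2 - 1) / (4 * (α ^ 2 - 1) * b 4 ^ 2 * b 0 ^ 2)

/-- The second partial derivative `F_qz`, in terms of `w`. -/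
def Fqz (α : ℝ) (b : ℝ⁵) : ℝ := α ^ 2 * (1 - W b) / ((α ^ 2 - 1) * b 4 * b 0)

/-- The coefficient `G = F_z F_q - F_qx - F F_qz` in `ω₄ = K dq - G dx`, in terms of `w`. -/
def G (α : ℝ) (b : ℝ⁵) : ℝ :=
  (α ^ 2 * W b ^ 2 - 3 * (α ^ 2 - 1)) / (4 * (α ^ 2 - 1) ^ 2 * b 0 ^ 3 * b 4 ^ 2)

/-- The partial derivative `G_z`, in terms of `w`. -/
def Gz (α : ℝ) (b : ℝ⁵) : ℝ := -(α ^ 2 * W b) / ((α ^ 2 - 1) ^ 2 * b 0 ^ 2 * b 4)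

lemma hasFDerivAt_coord (i : Fin 5) (a : ℝ⁵) : HasFDerivAt (fun b : ℝ⁵ => b i) (dc i) a :=
  hasFDerivAt_apply i a

lemma hasFDerivAt_W (a : ℝ⁵) : HasFDerivAt W
    (-((2 * a 4 * a 2) • dc 0 + (2 * a 4 * a 0) • dc 2 + (2 * a 0 * a 2) • dc 4)) a := by
  refine ((((hasFDerivAt_coord 4 a).const_mul 2).fun_mul (hasFDerivAt_coord 0 a)).fun_mul
    (hasFDerivAt_coord 2 a)).const_sub 1 |>.congr_fderiv ?_
  ext v
  simp only [add_apply, smul_apply, neg_apply, smul_eq_mul]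
  ring

lemma hasFDerivAt_F (hα : α ^ 2 - 1 ≠ 0) (ha : a ∈ U) :
    HasFDerivAt (F α) ((1 / (α ^ 2 - 1) * (a 2 / a 0 ^ 2 - 1 / (2 * a 4 * a 0 ^ 3))) • dc 0
      + Fz α a • dc 2 + Fq α a • dc 4) a := by
  obtain ⟨hx, hq⟩ : a 0 ≠ 0 ∧ a 4 ≠ 0 := ⟨ha.1.ne', ha.2.ne'⟩
  have dx := hasFDerivAt_coord 0 a
  have dz := hasFDerivAt_coord 2 a
  have dq := hasFDerivAt_coord 4 a
  have hqz := dq.fun_mul (dz.pow 2)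
  have hinv := hasFDerivAt_div (hasFDerivAt_const 1 a)
    ((dq.const_mul 4).fun_mul (dx.pow 2)) (by positivity)
  refine (hqz.fun_add (((hqz.fun_sub (hasFDerivAt_div dz dx hx)).fun_add hinv).const_mul
    (1 / (α ^ 2 - 1)))).congr_fderiv ?_
  ext v
  simp only [add_apply, sub_apply, smul_apply, zero_apply, smul_eq_mul, nsmul_eq_mul, Fz, Fq, W]
  push_cast
  field_simp
  ring

lemma hasFDerivAt_Fq (hα : α ^ 2 - 1 ≠ 0) (ha : a ∈ U) :
    HasFDerivAt (Fq α) ((1 / (2 * (α ^ 2 - 1) * a 4 ^ 2 * a 0 ^ 3)) • dc 0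
      + Fqz α a • dc 2 + K α a • dc 4) a := by
  obtain ⟨hx, hq⟩ : a 0 ≠ 0 ∧ a 4 ≠ 0 := ⟨ha.1.ne', ha.2.ne'⟩
  have dx := hasFDerivAt_coord 0 a
  have dq := hasFDerivAt_coord 4 a
  refine (hasFDerivAt_div
    (((((hasFDerivAt_W a).const_sub 1).pow 2).const_mul (α ^ 2)).sub_const 1)
    (((dq.pow 2).const_mul (4 * (α ^ 2 - 1))).fun_mul (dx.pow 2))
    (by positivity)).congr_fderiv ?_
  ext v
  simp only [add_apply, sub_apply, neg_apply, smul_apply, smul_eq_mul, nsmul_eq_mul, Fqz, K, W]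
  push_cast
  field_simp
  ring

lemma hasFDerivAt_K (hα : α ^ 2 - 1 ≠ 0) (ha : a ∈ U) :
    HasFDerivAt (K α) (-(K α a • ((3 / a 4) • dc 4 + (2 / a 0) • dc 0))) a := by
  obtain ⟨hx, hq⟩ : a 0 ≠ 0 ∧ a 4 ≠ 0 := ⟨ha.1.ne', ha.2.ne'⟩
  refine (hasFDerivAt_div (hasFDerivAt_const 1 a)
    (((((hasFDerivAt_coord 4 a).pow 3).const_mul 2).fun_mul
      ((hasFDerivAt_coord 0 a).pow 2)).mul_const (α ^ 2 - 1)) (by positivity)).congr_fderiv ?_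
  ext v
  simp only [add_apply, sub_apply, neg_apply, smul_apply, zero_apply, smul_eq_mul, nsmul_eq_mul, K]
  push_cast
  field_simp
  ring

-- The `dx`-coefficient is irrelevant because `G` only occurs in the product `G dx`.
lemma hasFDerivAt_G (hα : α ^ 2 - 1 ≠ 0) (ha : a ∈ U) :
    ∃ c : ℝ, HasFDerivAt (G α)
      (c • dc 0 + Gz α a • dc 2 + (K α a * (Fz α a + 2 / a 0)) • dc 4) a := by
  obtain ⟨hx, hq⟩ : a 0 ≠ 0 ∧ a 4 ≠ 0 := ⟨ha.1.ne', ha.2.ne'⟩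
  refine ⟨(-(α ^ 2 * W a * (1 - W a) * 2) - 3 * (α ^ 2 * W a ^ 2 - 3 * (α ^ 2 - 1))) /
    (4 * (α ^ 2 - 1) ^ 2 * a 0 ^ 4 * a 4 ^ 2), (hasFDerivAt_div
    ((((hasFDerivAt_W a).pow 2).const_mul (α ^ 2)).sub_const (3 * (α ^ 2 - 1)))
    ((((hasFDerivAt_coord 0 a).pow 3).const_mul (4 * (α ^ 2 - 1) ^ 2)).fun_mul
      ((hasFDerivAt_coord 4 a).pow 2)) (by positivity)).congr_fderiv ?_⟩
  ext v
  simp only [add_apply, sub_apply, neg_apply, smul_apply, smul_eq_mul, nsmul_eq_mul, K, Fz, Gz, W]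
  push_cast
  field_simp
  ring

lemma Fqx_eq (hα : α ^ 2 - 1 ≠ 0) (ha : a ∈ U) :
    1 / (2 * (α ^ 2 - 1) * a 4 ^ 2 * a 0 ^ 3) = Fz α a * Fq α a - F α a * Fqz α a - G α a := by
  obtain ⟨hx, hq⟩ : a 0 ≠ 0 ∧ a 4 ≠ 0 := ⟨ha.1.ne', ha.2.ne'⟩
  simp only [Fz, Fq, F, Fqz, G, W]
  field_simp
  ring

lemma θ₁_eq (α : ℝ) (b : ℝ⁵) : θ₁ α b = ω₃ α b - Fq α b • ω₂ b := by
  simp only [θ₁, Fq, W]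
  congr 3 <;> ring

lemma ω₄_eq (α : ℝ) (b : ℝ⁵) : ω₄ α b = K α b • dc 4 - G α b • dc 0 := by
  simp only [ω₄, K, G, W]
  congr 3
  ring

lemma dc_zero_eq (a : ℝ⁵) : dc 0 = -ω₅ a := by
  rw [ω₅, neg_neg]

lemma dc_two_eq (α : ℝ) (a : ℝ⁵) : dc 2 = θ₁ α a + Fq α a • ω₂ a - F α a • ω₅ a := by
  rw [θ₁_eq, ω₃, ω₅]
  module

lemma dc_three_eq (a : ℝ⁵) : dc 3 = ω₂ a - a 4 • ω₅ a := by
  rw [ω₂, ω₅]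
  module

lemma K_ne_zero (hα : α ^ 2 - 1 ≠ 0) (ha : a ∈ U) : K α a ≠ 0 := by
  obtain ⟨hx, hq⟩ : a 0 ≠ 0 ∧ a 4 ≠ 0 := ⟨ha.1.ne', ha.2.ne'⟩
  rw [K]
  positivity

lemma dc_four_eq (hα : α ^ 2 - 1 ≠ 0) (ha : a ∈ U) :
    dc 4 = (K α a)⁻¹ • (ω₄ α a - G α a • ω₅ a) := by
  rw [eq_inv_smul_iff₀ (K_ne_zero hα ha), ω₄_eq, ω₅]
  module

lemma hasExtDerivAt_ω₁ (a : ℝ⁵) : HasExtDerivAt ω₁ (ω₂ a ⋏ ω₅ a) a := by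
  have h := (hasExtDerivAt_const (dc 1) a).sub
    ((hasExtDerivAt_const (dc 0) a).smul (hasFDerivAt_coord 3 a))
  refine h.congr_deriv ?_
  ext u v
  simp only [covWedge_apply, Pi.sub_apply, Pi.add_apply, Pi.smul_apply, Pi.zero_apply, dc_zero_eq a,
    dc_three_eq a, sub_apply, neg_apply, smul_apply, smul_eq_mul]
  ring

lemma hasExtDerivAt_ω₂ (hα : α ^ 2 - 1 ≠ 0) (ha : a ∈ U) :
    HasExtDerivAt ω₂ ((K α a)⁻¹ • (ω₄ α a ⋏ ω₅ a)) a := by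
  have h := (hasExtDerivAt_const (dc 3) a).sub
    ((hasExtDerivAt_const (dc 0) a).smul (hasFDerivAt_coord 4 a))
  refine h.congr_deriv ?_
  ext u v
  simp only [covWedge_apply, Pi.sub_apply, Pi.add_apply, Pi.smul_apply, Pi.zero_apply, dc_zero_eq a,
    dc_four_eq hα ha, sub_apply, neg_apply, smul_apply, smul_eq_mul]
  ring

lemma hasExtDerivAt_ω₅ (a : ℝ⁵) : HasExtDerivAt ω₅ 0 a :=
  hasExtDerivAt_const (-dc 0) a

lemma hasExtDerivAt_θ₁ (hα : α ^ 2 - 1 ≠ 0) (ha : a ∈ U) :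
    HasExtDerivAt (θ₁ α) (θ₁ α a ⋏ (Fz α a • ω₅ a - Fqz α a • ω₂ a) + ω₂ a ⋏ ω₄ α a) a := by
  have h := ((hasExtDerivAt_const (dc 2) a).sub
    ((hasExtDerivAt_const (dc 0) a).smul (hasFDerivAt_F hα ha))).sub
    ((hasExtDerivAt_ω₂ hα ha).smul (hasFDerivAt_Fq hα ha))
  refine (h.congr_of_eqOn isOpen_U ha fun b _ => θ₁_eq α b).congr_deriv ?_
  have hK := K_ne_zero hα ha
  ext u v
  simp only [covWedge_apply, Pi.sub_apply, Pi.add_apply, Pi.smul_apply, Pi.zero_apply, dc_zero_eq a,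
    dc_two_eq α a, dc_four_eq hα ha, sub_apply, add_apply, neg_apply, smul_apply, smul_eq_mul,
    Fqx_eq hα ha]
  field_simp
  ring

lemma hasExtDerivAt_ω₄ (hα : α ^ 2 - 1 ≠ 0) (ha : a ∈ U) :
    HasExtDerivAt (ω₄ α) (Fz α a • (ω₄ α a ⋏ ω₅ a)
      + Gz α a • ((θ₁ α a + Fq α a • ω₂ a) ⋏ ω₅ a)) a := by
  obtain ⟨c, hG⟩ := hasFDerivAt_G hα ha
  have h := ((hasExtDerivAt_const (dc 4) a).smul (hasFDerivAt_K hα ha)).sub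
    ((hasExtDerivAt_const (dc 0) a).smul hG)
  refine (h.congr_of_eqOn isOpen_U ha fun b _ => ω₄_eq α b).congr_deriv ?_
  have hK := K_ne_zero hα ha
  ext u v
  simp only [covWedge_apply, Pi.sub_apply, Pi.add_apply, Pi.smul_apply, Pi.zero_apply, dc_zero_eq a,
    dc_two_eq α a, dc_four_eq hα ha, sub_apply, add_apply, neg_apply, smul_apply, smul_eq_mul]
  field_simp
  ring

end MongeNormalForm

section CubeRoots

variable {α : ℝ} {a : ℝ⁵}

/-- The cube root `s` of `2(α² - 1)`, so that `α² = s³/2 + 1`. -/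
def S (α : ℝ) : ℝ := (2 * (α ^ 2 - 1)) ^ ((1 : ℝ) / 3)

/-- The cube root `t` of the coordinate `x`. -/
def T (b : ℝ⁵) : ℝ := b 0 ^ ((1 : ℝ) / 3)

/-- The function `n = 1/(t⁵q)`, used in place of `q`; it is chosen so that `K^{1/3} = n t³/s`. -/
def N (b : ℝ⁵) : ℝ := (T b ^ 5 * b 4)⁻¹

lemma rpow_third_pow_three {x : ℝ} (hx : 0 ≤ x) : (x ^ ((1 : ℝ) / 3)) ^ 3 = x := by
  rw [← rpow_natCast_div hx]
  norm_num

lemma S_pos (hα : 1 < α ^ 2) : 0 < S α := by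
  have : 0 < α ^ 2 - 1 := sub_pos.2 hα
  rw [S]
  positivity

lemma sq_eq_S_pow (hα : 1 < α ^ 2) : α ^ 2 = S α ^ 3 / 2 + 1 := by
  have hpow : S α ^ 3 = 2 * (α ^ 2 - 1) := rpow_third_pow_three (by linarith)
  linarith

lemma T_pos (ha : a ∈ U) : 0 < T a :=
  rpow_pos_of_pos ha.1 _

lemma N_pos (ha : a ∈ U) : 0 < N a :=
  inv_pos.2 (mul_pos (pow_pos (T_pos ha) 5) ha.2)

lemma coord_zero_eq (ha : a ∈ U) : a 0 = T a ^ 3 :=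
  (rpow_third_pow_three ha.1.le).symm

lemma coord_four_eq (ha : a ∈ U) : a 4 = (T a ^ 5 * N a)⁻¹ := by
  have hT := T_pos ha
  rw [N]
  field_simp

lemma K_eq (hα : 1 < α ^ 2) (ha : a ∈ U) : K α a = (N a * T a ^ 3 / S α) ^ 3 := by
  have hT := T_pos ha
  have hN := N_pos ha
  have hS := S_pos hα
  rw [K, coord_zero_eq ha, coord_four_eq ha, sq_eq_S_pow hα]
  field_simp
  ring

lemma Fz_eq (hα : 1 < α ^ 2) (ha : a ∈ U) :
    Fz α a = (S α ^ 3 - 2 * α ^ 2 * W a) / (S α ^ 3 * T a ^ 3) := by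
  have hT := T_pos ha
  have hS := S_pos hα
  rw [Fz, coord_zero_eq ha, sq_eq_S_pow hα]
  field_simp
  ring

lemma Fq_eq (hα : 1 < α ^ 2) (ha : a ∈ U) :
    Fq α a = (α ^ 2 * (1 - W a) ^ 2 - 1) * N a ^ 2 * T a ^ 4 / (2 * S α ^ 3) := by
  have hT := T_pos ha
  have hN := N_pos ha
  have hS := S_pos hα
  rw [Fq, coord_zero_eq ha, coord_four_eq ha, sq_eq_S_pow hα]
  field_simp
  ring

lemma Fqz_eq (hα : 1 < α ^ 2) (ha : a ∈ U) :
    Fqz α a = 2 * α ^ 2 * (1 - W a) * T a ^ 2 * N a / S α ^ 3 := by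
  have hT := T_pos ha
  have hN := N_pos ha
  have hS := S_pos hα
  rw [Fqz, coord_zero_eq ha, coord_four_eq ha, sq_eq_S_pow hα]
  field_simp
  ring

lemma G_eq (hα : 1 < α ^ 2) (ha : a ∈ U) :
    G α a = (2 * α ^ 2 * W a ^ 2 - 3 * S α ^ 3) * T a * N a ^ 2 / (2 * S α ^ 6) := by
  have hT := T_pos ha
  have hN := N_pos ha
  have hS := S_pos hα
  rw [G, coord_zero_eq ha, coord_four_eq ha, sq_eq_S_pow hα]
  field_simp
  ring

lemma Gz_eq (hα : 1 < α ^ 2) (ha : a ∈ U) :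
    Gz α a = -(4 * α ^ 2 * W a * N a) / (S α ^ 6 * T a) := by
  have hT := T_pos ha
  have hN := N_pos ha
  have hS := S_pos hα
  rw [Gz, coord_zero_eq ha, coord_four_eq ha, sq_eq_S_pow hα]
  field_simp
  ring

lemma K_rpow_third (hα : 1 < α ^ 2) (ha : a ∈ U) :
    K α a ^ ((1 : ℝ) / 3) = N a * T a ^ 3 / S α := by
  have hT := T_pos ha
  have hN := N_pos ha
  have hS := S_pos hα
  rw [K_eq hα ha, one_div]
  exact_mod_cast pow_rpow_inv_natCast (by positivity) three_ne_zero

lemma K_rpow_neg_third (hα : 1 < α ^ 2) (ha : a ∈ U) :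
    K α a ^ (-(1 : ℝ) / 3) = S α / (N a * T a ^ 3) := by
  have hT := T_pos ha
  have hN := N_pos ha
  have hS := S_pos hα
  have hK : 0 ≤ K α a := by
    rw [K_eq hα ha]
    positivity
  rw [neg_div, rpow_neg hK, K_rpow_third hα ha, inv_div]

lemma S_pow (hα : 1 < α ^ 2) (n : ℕ) :
    S α ^ n = 2 ^ ((n : ℝ) / 3) * (α ^ 2 - 1) ^ ((n : ℝ) / 3) := by
  have h : 0 ≤ α ^ 2 - 1 := by linarith
  rw [S, ← rpow_natCast_div (by positivity), mul_rpow zero_le_two h]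

lemma sub_one_rpow_div_three (hα : 1 < α ^ 2) {k m n : ℕ} (h : m + n = 3 * k) :
    (α ^ 2 - 1) ^ ((n : ℝ) / 3) = 2 ^ ((m : ℝ) / 3) * S α ^ n / 2 ^ k := by
  have h2 : (2 : ℝ) ^ ((m : ℝ) / 3) * 2 ^ ((n : ℝ) / 3) = 2 ^ k := by
    rw [← rpow_add two_pos, ← rpow_natCast 2 k, ← add_div, ← Nat.cast_add, h]
    push_cast
    congr 1
    ring
  rw [S_pow hα, ← mul_assoc, h2]
  field_simp

lemma a₄₂_eq (hα : 1 < α ^ 2) (ha : a ∈ U) :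
    a₄₂ α a = 2 * α ^ 2 * (α ^ 2 - 9) / (15 * S α ^ 8) * (N a * W a) ^ 2 := by
  have hT := T_pos ha
  have hN := N_pos ha
  have hS := S_pos hα
  have hx : a 0 ^ ((10 : ℝ) / 3) = T a ^ 10 := by
    exact_mod_cast rpow_natCast_div ha.1.le 10 3
  have hβ : (α ^ 2 - 1) ^ ((8 : ℝ) / 3) = 2 ^ ((1 : ℝ) / 3) * S α ^ 8 / 2 ^ 3 := by
    exact_mod_cast sub_one_rpow_div_three hα (m := 1) (n := 8) rfl
  rw [a₄₂, hx, hβ, W, coord_zero_eq ha, coord_four_eq ha]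
  field_simp
  ring

lemma a₄₃_eq (hα : 1 < α ^ 2) (ha : a ∈ U) :
    a₄₃ α a = -(N a * (6 * α ^ 2 * W a ^ 2 - 4 * α ^ 2 * W a - 3 * S α ^ 3)) / (6 * S α ^ 4) := by
  have hT := T_pos ha
  have hN := N_pos ha
  have hS := S_pos hα
  have hx : a 0 ^ ((5 : ℝ) / 3) = T a ^ 5 := by
    exact_mod_cast rpow_natCast_div ha.1.le 5 3
  have hβ : (α ^ 2 - 1) ^ ((4 : ℝ) / 3) = 2 ^ ((2 : ℝ) / 3) * S α ^ 4 / 2 ^ 2 := by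
    exact_mod_cast sub_one_rpow_div_three hα (m := 2) (n := 4) rfl
  rw [a₄₃, hx, hβ, W, coord_zero_eq ha, coord_four_eq ha, sq_eq_S_pow hα]
  field_simp
  ring

lemma a₅₂_eq (hα : 1 < α ^ 2) (ha : a ∈ U) :
    a₅₂ α a = 2 * (2 * α ^ 2 - 3) / (5 * S α ^ 2 * T a) := by
  have hT := T_pos ha
  have hS := S_pos hα
  have hβ : (α ^ 2 - 1) ^ ((2 : ℝ) / 3) = 2 ^ ((1 : ℝ) / 3) * S α ^ 2 / 2 ^ 1 := by
    exact_mod_cast sub_one_rpow_div_three hα (m := 1) (n := 2) rfl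
  rw [a₅₂, hβ, ← T]
  field_simp

lemma a₅₃_eq (hα : 1 < α ^ 2) (ha : a ∈ U) : a₅₃ α a = -S α ^ 2 / (N a * T a) := by
  have hT := T_pos ha
  have hN := N_pos ha
  have hx : a 0 ^ ((4 : ℝ) / 3) = T a ^ 4 := by
    exact_mod_cast rpow_natCast_div ha.1.le 4 3
  have hS2 : S α ^ 2 = 2 ^ ((2 : ℝ) / 3) * (α ^ 2 - 1) ^ ((2 : ℝ) / 3) := by
    exact_mod_cast S_pow hα 2
  rw [a₅₃, hx, hS2, coord_four_eq ha]
  field_simp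

lemma θ₃_eq (hα : 1 < α ^ 2) (ha : a ∈ U) : θ₃ α a = (N a * T a ^ 3 / S α) • ω₂ a := by
  rw [θ₃, K_rpow_third hα ha]

lemma θ₄_eq (hα : 1 < α ^ 2) (ha : a ∈ U) :
    θ₄ α a = (S α / (N a * T a ^ 3)) • ω₄ α a
      + (2 * α ^ 2 * (α ^ 2 - 9) / (15 * S α ^ 8) * (N a * W a) ^ 2) • ω₁ a
      - (N a ^ 2 * T a ^ 3 * (6 * α ^ 2 * W a ^ 2 - 4 * α ^ 2 * W a - 3 * S α ^ 3)
        / (6 * S α ^ 5)) • ω₂ a := by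
  have hS := S_pos hα
  rw [θ₄, K_rpow_neg_third hα ha, a₄₂_eq hα ha, a₄₃_eq hα ha, θ₃_eq hα ha, θ₂]
  match_scalars <;> field_simp

lemma θ₅_eq (hα : 1 < α ^ 2) (ha : a ∈ U) :
    θ₅ α a = (S α / (N a * T a ^ 3)) • ω₅ a
      + (2 * (2 * α ^ 2 - 3) / (5 * S α ^ 2 * T a)) • ω₁ a - (S α * T a ^ 2) • ω₂ a := by
  have hS := S_pos hα
  have hT := T_pos ha
  have hN := N_pos ha
  rw [θ₅, K_rpow_neg_third hα ha, a₅₂_eq hα ha, a₅₃_eq hα ha, θ₃_eq hα ha, θ₂]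
  match_scalars <;> field_simp

lemma hasFDerivAt_T (ha : a ∈ U) : HasFDerivAt T ((-1 / (3 * T a ^ 2)) • ω₅ a) a := by
  refine ((hasFDerivAt_coord 0 a).rpow_const (Or.inl ha.1.ne')).congr_fderiv ?_
  have hT := T_pos ha
  rw [rpow_sub_one ha.1.ne', ← T, coord_zero_eq ha, dc_zero_eq a]
  match_scalars
  field_simp

lemma hasFDerivAt_N (hα : 1 < α ^ 2) (ha : a ∈ U) :
    HasFDerivAt N ((N a * (S α ^ 3 + 6 * α ^ 2 * W a ^ 2) / (6 * S α ^ 3 * T a ^ 3)) • ω₅ a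
      - (S α ^ 3 / (T a ^ 4 * N a)) • ω₄ α a) a := by
  have hT := T_pos ha
  have hN := N_pos ha
  have hS := S_pos hα
  have hq := ha.2
  refine ((hasDerivAt_inv (by positivity)).comp_hasFDerivAt a
    (((hasFDerivAt_T ha).pow 5).fun_mul (hasFDerivAt_coord 4 a))).congr_fderiv ?_
  rw [dc_four_eq (sub_pos.2 hα).ne' ha, K_eq hα ha, G_eq hα ha, coord_four_eq ha,
    sq_eq_S_pow hα]
  match_scalars <;> (push_cast; field_simp; try ring)

lemma hasFDerivAt_W_coframe (hα : 1 < α ^ 2) (ha : a ∈ U) :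
    HasFDerivAt W (-(2 / (T a ^ 2 * N a)) • θ₁ α a
      - ((α ^ 2 * (1 - W a) ^ 2 - 1) * N a * T a ^ 2 / S α ^ 3) • ω₂ a
      - (S α ^ 3 * (1 - W a) / (N a ^ 2 * T a ^ 4)) • ω₄ α a
      + ((2 * α ^ 2 * W a ^ 2 * (2 - W a) - S α ^ 3 * W a) / (2 * S α ^ 3 * T a ^ 3)) • ω₅ a) a
    := by
  have hT := T_pos ha
  have hN := N_pos ha
  have hS := S_pos hα
  have hz : a 2 = (1 - W a) * T a ^ 2 * N a / 2 := by
    rw [W, coord_zero_eq ha, coord_four_eq ha]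
    field_simp
    ring
  refine (hasFDerivAt_W a).congr_fderiv ?_
  rw [dc_zero_eq a, dc_two_eq α a, dc_four_eq (sub_pos.2 hα).ne' ha, K_eq hα ha, G_eq hα ha,
    Fq_eq hα ha, F, hz, coord_zero_eq ha, coord_four_eq ha, sq_eq_S_pow hα]
  match_scalars <;> (field_simp; try ring)

lemma hasFDerivAt_N_mul_T_pow_div_S (hα : 1 < α ^ 2) (ha : a ∈ U) :
    HasFDerivAt (fun b => N b * T b ^ 3 / S α)
      ((N a * (6 * α ^ 2 * W a ^ 2 - 5 * S α ^ 3) / (6 * S α ^ 4)) • ω₅ a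
        - (S α ^ 2 / (N a * T a)) • ω₄ α a) a := by
  have hT := T_pos ha
  have hN := N_pos ha
  have hS := S_pos hα
  simp only [div_eq_mul_inv _ (S α)]
  refine (((hasFDerivAt_N hα ha).fun_mul ((hasFDerivAt_T ha).pow 3)).mul_const (S α)⁻¹)
    |>.congr_fderiv ?_
  match_scalars <;> (push_cast; field_simp; try ring)

lemma hasFDerivAt_S_div_N_mul_T_pow (hα : 1 < α ^ 2) (ha : a ∈ U) :
    HasFDerivAt (fun b => S α / (N b * T b ^ 3))
      ((S α ^ 4 / (N a ^ 3 * T a ^ 7)) • ω₄ α a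
        - ((6 * α ^ 2 * W a ^ 2 - 5 * S α ^ 3) / (6 * S α ^ 2 * N a * T a ^ 6)) • ω₅ a) a := by
  have hT := T_pos ha
  have hN := N_pos ha
  have hS := S_pos hα
  refine (hasFDerivAt_div (hasFDerivAt_const (S α) a)
    ((hasFDerivAt_N hα ha).fun_mul ((hasFDerivAt_T ha).pow 3)) (by positivity)).congr_fderiv ?_
  match_scalars <;> (push_cast; field_simp; try ring)

end CubeRoots

section ConnectionForms

/-- The connection form `Ω₁`. -/
def conn₁ (α : ℝ) (b : ℝ⁵) : ℝ⁵ →L[ℝ] ℝ :=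
  (4 * N b * (3 * α ^ 2 * (α ^ 2 + 1) * W b - (2 * α ^ 2 - 3) * S α ^ 3)
      / (15 * S α ^ 6 * T b)) • θ₂ b
    - (2 * (2 * α ^ 2 + 7) / (15 * S α ^ 2 * T b)) • θ₃ α b
    - (2 * N b * (2 * α ^ 2 * W b - S α ^ 3) / (3 * S α ^ 4)) • θ₅ α b

/-- The connection form `Ω₂`. -/
def conn₂ (α : ℝ) (b : ℝ⁵) : ℝ⁵ →L[ℝ] ℝ :=
  (4 * α ^ 2 * N b * W b / (S α ^ 6 * T b)) • θ₁ α b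
    + (16 * α ^ 4 * (α ^ 2 - 9) * (N b * W b) ^ 3 / (45 * S α ^ 12)) • θ₂ b
    + (2 * α ^ 2 * (α ^ 2 - 9) * (N b * W b) ^ 2 / (15 * S α ^ 8)) • θ₃ α b

/-- The connection form `Ω₃`. -/
def conn₃ : ℝ⁵ → ℝ⁵ →L[ℝ] ℝ := 0

/-- The connection form `Ω₄`. -/
def conn₄ (α : ℝ) (b : ℝ⁵) : ℝ⁵ →L[ℝ] ℝ :=
  (2 * (2 * α ^ 2 - 3) * N b / (15 * S α ^ 3 * T b)) • θ₂ b
    + (2 * (4 * α ^ 2 - 1) / (15 * S α ^ 2 * T b)) • θ₃ α b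
    + (N b * (2 * α ^ 2 * W b - S α ^ 3) / (3 * S α ^ 4)) • θ₅ α b

/-- The connection form `Ω₅`. -/
def conn₅ (α : ℝ) (b : ℝ⁵) : ℝ⁵ →L[ℝ] ℝ :=
  -((9 * α ^ 4 - 32 * α ^ 2 + 9) / (25 * S α ^ 4 * T b ^ 2)) • θ₂ b

/-- The connection form `Ω₆`. -/
def conn₆ (α : ℝ) (b : ℝ⁵) : ℝ⁵ →L[ℝ] ℝ :=
  -((9 * α ^ 4 - 32 * α ^ 2 + 9) / (25 * S α ^ 4 * T b ^ 2)) • θ₁ α b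
    + (2 * α ^ 2 * (17 * α ^ 4 - 156 * α ^ 2 + 27) * (N b * W b) ^ 2
      / (75 * S α ^ 10 * T b)) • θ₂ b
    + (4 * α ^ 2 * (α ^ 2 + 6) * N b * W b / (15 * S α ^ 6 * T b)) • θ₃ α b
    + (2 * (2 * α ^ 2 - 3) / (5 * S α ^ 2 * T b)) • θ₄ α b
    - (2 * α ^ 2 * (α ^ 2 - 9) * (N b * W b) ^ 2 / (15 * S α ^ 8)) • θ₅ α b

/-- The connection form `Ω₇`. -/
def conn₇ (α : ℝ) (b : ℝ⁵) : ℝ⁵ →L[ℝ] ℝ :=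
  (8 * α ^ 4 * N b * W b / (3 * S α ^ 8 * T b ^ 2)) • θ₂ b
    - (4 * (9 * α ^ 4 - 7 * α ^ 2 + 9) / (75 * S α ^ 4 * T b ^ 2)) • θ₃ α b

end ConnectionForms

section Smoothness

variable {α : ℝ}

lemma contDiffOn_T : ContDiffOn ℝ (⊤ : ℕ∞) T U := by
  unfold T
  fun_prop (disch := exact fun b hb => hb.1.ne')

lemma contDiffOn_N : ContDiffOn ℝ (⊤ : ℕ∞) N U := by
  have hT := contDiffOn_T
  unfold N
  fun_prop (disch := exact fun b hb => (mul_pos (pow_pos (T_pos hb) 5) hb.2).ne')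

lemma contDiff_W : ContDiff ℝ (⊤ : ℕ∞) W := by
  unfold W
  fun_prop

lemma contDiff_ω₁ : ContDiff ℝ (⊤ : ℕ∞) ω₁ := by
  unfold ω₁
  fun_prop

lemma contDiff_ω₂ : ContDiff ℝ (⊤ : ℕ∞) ω₂ := by
  unfold ω₂
  fun_prop

lemma contDiffOn_ω₄ (hα : 1 < α ^ 2) : ContDiffOn ℝ (⊤ : ℕ∞) (ω₄ α) U := by
  unfold ω₄
  fun_prop (disch := intro b ⟨_, _⟩; have := sub_pos.2 hα; positivity)

lemma contDiffOn_θ₁ (hα : 1 < α ^ 2) : ContDiffOn ℝ (⊤ : ℕ∞) (θ₁ α) U := by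
  have h₂ := contDiff_ω₂.contDiffOn (s := U)
  unfold θ₁ ω₃ F
  fun_prop (disch := intro b ⟨_, _⟩; have := sub_pos.2 hα; positivity)

lemma contDiffOn_θ₃ (hα : 1 < α ^ 2) : ContDiffOn ℝ (⊤ : ℕ∞) (θ₃ α) U := by
  have hT := contDiffOn_T
  have hN := contDiffOn_N
  have h₂ := contDiff_ω₂.contDiffOn (s := U)
  refine ContDiffOn.congr ?_ fun b hb => θ₃_eq hα hb
  fun_prop

lemma contDiffOn_θ₄ (hα : 1 < α ^ 2) : ContDiffOn ℝ (⊤ : ℕ∞) (θ₄ α) U := by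
  have hT := contDiffOn_T
  have hN := contDiffOn_N
  have hW := contDiff_W.contDiffOn (s := U)
  have h₁ := contDiff_ω₁.contDiffOn (s := U)
  have h₂ := contDiff_ω₂.contDiffOn (s := U)
  have h₄ := contDiffOn_ω₄ hα
  refine ContDiffOn.congr ?_ fun b hb => θ₄_eq hα hb
  fun_prop (disch := intro b hb; have := S_pos hα; have := T_pos hb; have := N_pos hb; positivity)

lemma contDiffOn_θ₅ (hα : 1 < α ^ 2) : ContDiffOn ℝ (⊤ : ℕ∞) (θ₅ α) U := by
  have hT := contDiffOn_T
  have hN := contDiffOn_N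
  have h₁ := contDiff_ω₁.contDiffOn (s := U)
  have h₂ := contDiff_ω₂.contDiffOn (s := U)
  have h₅ : ContDiffOn ℝ (⊤ : ℕ∞) ω₅ U := contDiffOn_const
  refine ContDiffOn.congr ?_ fun b hb => θ₅_eq hα hb
  fun_prop (disch := intro b hb; have := S_pos hα; have := T_pos hb; have := N_pos hb; positivity)

lemma contDiffOn_conn₁ (hα : 1 < α ^ 2) : ContDiffOn ℝ (⊤ : ℕ∞) (conn₁ α) U := by
  have hT := contDiffOn_T
  have hN := contDiffOn_N
  have hW := contDiff_W.contDiffOn (s := U)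
  have h₂ := contDiff_ω₁.contDiffOn (s := U)
  have h₃ := contDiffOn_θ₃ hα
  have h₅ := contDiffOn_θ₅ hα
  unfold conn₁ θ₂
  fun_prop (disch := intro b hb; have := S_pos hα; have := T_pos hb; positivity)

lemma contDiffOn_conn₂ (hα : 1 < α ^ 2) : ContDiffOn ℝ (⊤ : ℕ∞) (conn₂ α) U := by
  have hT := contDiffOn_T
  have hN := contDiffOn_N
  have hW := contDiff_W.contDiffOn (s := U)
  have h₁ := contDiffOn_θ₁ hα
  have h₂ := contDiff_ω₁.contDiffOn (s := U)
  have h₃ := contDiffOn_θ₃ hα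
  unfold conn₂ θ₂
  fun_prop (disch := intro b hb; have := S_pos hα; have := T_pos hb; positivity)

lemma contDiffOn_conn₄ (hα : 1 < α ^ 2) : ContDiffOn ℝ (⊤ : ℕ∞) (conn₄ α) U := by
  have hT := contDiffOn_T
  have hN := contDiffOn_N
  have hW := contDiff_W.contDiffOn (s := U)
  have h₂ := contDiff_ω₁.contDiffOn (s := U)
  have h₃ := contDiffOn_θ₃ hα
  have h₅ := contDiffOn_θ₅ hα
  unfold conn₄ θ₂
  fun_prop (disch := intro b hb; have := S_pos hα; have := T_pos hb; positivity)

lemma contDiffOn_conn₅ (hα : 1 < α ^ 2) : ContDiffOn ℝ (⊤ : ℕ∞) (conn₅ α) U := by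
  have hT := contDiffOn_T
  have h₂ := contDiff_ω₁.contDiffOn (s := U)
  unfold conn₅ θ₂
  fun_prop (disch := intro b hb; have := S_pos hα; have := T_pos hb; positivity)

lemma contDiffOn_conn₆ (hα : 1 < α ^ 2) : ContDiffOn ℝ (⊤ : ℕ∞) (conn₆ α) U := by
  have hT := contDiffOn_T
  have hN := contDiffOn_N
  have hW := contDiff_W.contDiffOn (s := U)
  have h₁ := contDiffOn_θ₁ hα
  have h₂ := contDiff_ω₁.contDiffOn (s := U)
  have h₃ := contDiffOn_θ₃ hα
  have h₄ := contDiffOn_θ₄ hα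
  have h₅ := contDiffOn_θ₅ hα
  unfold conn₆ θ₂
  fun_prop (disch := intro b hb; have := S_pos hα; have := T_pos hb; positivity)

lemma contDiffOn_conn₇ (hα : 1 < α ^ 2) : ContDiffOn ℝ (⊤ : ℕ∞) (conn₇ α) U := by
  have hT := contDiffOn_T
  have hN := contDiffOn_N
  have hW := contDiff_W.contDiffOn (s := U)
  have h₂ := contDiff_ω₁.contDiffOn (s := U)
  have h₃ := contDiffOn_θ₃ hα
  unfold conn₇ θ₂
  fun_prop (disch := intro b hb; have := S_pos hα; have := T_pos hb; positivity)

end Smoothness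

section StructureEquations

variable {α : ℝ} {a : ℝ⁵}

lemma pow_four_eq_S_pow (hα : 1 < α ^ 2) : α ^ 4 = (S α ^ 3 / 2 + 1) ^ 2 := by
  rw [← sq_eq_S_pow hα, ← pow_mul]

lemma extd_θ₁ (hα : 1 < α ^ 2) (ha : a ∈ U) :
    extd (θ₁ α) a = θ₁ α a ⋏ ((2 : ℝ) • conn₁ α a + conn₄ α a) + θ₂ a ⋏ conn₂ α a
      + θ₃ α a ⋏ θ₄ α a := by
  have hT := T_pos ha
  have hN := N_pos ha
  have hS := S_pos hα
  rw [(hasExtDerivAt_θ₁ (sub_pos.2 hα).ne' ha).extd_eq]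
  ext u v
  simp only [covWedge_apply, Pi.add_apply, add_apply, sub_apply, smul_apply, smul_eq_mul,
    conn₁, conn₂, conn₄, θ₂, θ₃_eq hα ha, θ₄_eq hα ha, θ₅_eq hα ha, Fz_eq hα ha, Fqz_eq hα ha,
    pow_four_eq_S_pow hα, sq_eq_S_pow hα]
  field_simp
  ring

lemma extd_θ₂ (hα : 1 < α ^ 2) (ha : a ∈ U) :
    extd θ₂ a = θ₁ α a ⋏ conn₃ a + θ₂ a ⋏ (conn₁ α a + (2 : ℝ) • conn₄ α a) + θ₃ α a ⋏ θ₅ α a := by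
  have hT := T_pos ha
  have hN := N_pos ha
  have hS := S_pos hα
  rw [θ₂, (hasExtDerivAt_ω₁ a).extd_eq]
  ext u v
  simp only [covWedge_apply, Pi.add_apply, add_apply, sub_apply, smul_apply, smul_eq_mul,
    Pi.zero_apply, zero_apply, conn₁, conn₃, conn₄, θ₂, θ₃_eq hα ha, θ₅_eq hα ha, sq_eq_S_pow hα]
  field_simp
  ring

lemma extd_θ₃ (hα : 1 < α ^ 2) (ha : a ∈ U) :
    extd (θ₃ α) a = θ₁ α a ⋏ conn₅ α a + θ₂ a ⋏ conn₆ α a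
      + θ₃ α a ⋏ (conn₁ α a + conn₄ α a) + θ₄ α a ⋏ θ₅ α a := by
  have hT := T_pos ha
  have hN := N_pos ha
  have hS := S_pos hα
  have h := ((hasExtDerivAt_ω₂ (sub_pos.2 hα).ne' ha).smul (hasFDerivAt_N_mul_T_pow_div_S hα ha))
    |>.congr_of_eqOn isOpen_U ha fun b hb => θ₃_eq hα hb
  rw [h.extd_eq]
  ext u v
  simp only [covWedge_apply, Pi.add_apply, Pi.smul_apply, add_apply, sub_apply, smul_apply,
    smul_eq_mul, conn₁, conn₄, conn₅, conn₆, θ₂, θ₃_eq hα ha, θ₄_eq hα ha, θ₅_eq hα ha,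
    K_eq hα ha, pow_four_eq_S_pow hα, sq_eq_S_pow hα]
  field_simp
  ring

lemma extd_θ₄ (hα : 1 < α ^ 2) (ha : a ∈ U) :
    extd (θ₄ α) a = θ₁ α a ⋏ conn₇ α a + ((4 : ℝ) / 3) • (θ₃ α a ⋏ conn₆ α a)
      + θ₄ α a ⋏ conn₁ α a + θ₅ α a ⋏ conn₂ α a := by
  have hT := T_pos ha
  have hN := N_pos ha
  have hS := S_pos hα
  have hβ := (sub_pos.2 hα).ne'
  have dT := hasFDerivAt_T ha
  have dN := hasFDerivAt_N hα ha
  have dW := hasFDerivAt_W_coframe hα ha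
  have dA₁ := ((dN.fun_mul dW).pow 2).const_mul (2 * α ^ 2 * (α ^ 2 - 9) / (15 * S α ^ 8))
  have dA₂ := (((dN.pow 2).fun_mul (dT.pow 3)).fun_mul ((((dW.pow 2).const_mul (6 * α ^ 2)).fun_sub
    (dW.const_mul (4 * α ^ 2))).sub_const (3 * S α ^ 3))).mul_const (6 * S α ^ 5)⁻¹
  have h := (((hasExtDerivAt_ω₄ hβ ha).smul (hasFDerivAt_S_div_N_mul_T_pow hα ha)).add
    ((hasExtDerivAt_ω₁ a).smul dA₁)).sub ((hasExtDerivAt_ω₂ hβ ha).smul dA₂)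
    |>.congr_of_eqOn isOpen_U ha fun b hb => θ₄_eq hα hb
  rw [h.extd_eq]
  ext u v
  simp only [covWedge_apply, Pi.add_apply, Pi.sub_apply, Pi.smul_apply, add_apply, sub_apply,
    smul_apply, smul_eq_mul, nsmul_eq_mul, conn₁, conn₂, conn₆, conn₇, θ₂, θ₃_eq hα ha,
    θ₄_eq hα ha, θ₅_eq hα ha, K_eq hα ha, Fz_eq hα ha, Fq_eq hα ha, Gz_eq hα ha,
    pow_four_eq_S_pow hα, sq_eq_S_pow hα]
  push_cast
  field_simp
  ring

lemma extd_θ₅ (hα : 1 < α ^ 2) (ha : a ∈ U) :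
    extd (θ₅ α) a = θ₂ a ⋏ conn₇ α a - ((4 : ℝ) / 3) • (θ₃ α a ⋏ conn₅ α a)
      + θ₄ α a ⋏ conn₃ a + θ₅ α a ⋏ conn₄ α a := by
  have hT := T_pos ha
  have hN := N_pos ha
  have hS := S_pos hα
  have dT := hasFDerivAt_T ha
  have dA₁ := hasFDerivAt_div (hasFDerivAt_const (2 * (2 * α ^ 2 - 3)) a)
    (dT.const_mul (5 * S α ^ 2)) (by positivity)
  have dA₂ := (dT.pow 2).const_mul (S α)
  have h := (((hasExtDerivAt_ω₅ a).smul (hasFDerivAt_S_div_N_mul_T_pow hα ha)).add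
    ((hasExtDerivAt_ω₁ a).smul dA₁)).sub ((hasExtDerivAt_ω₂ (sub_pos.2 hα).ne' ha).smul dA₂)
    |>.congr_of_eqOn isOpen_U ha fun b hb => θ₅_eq hα hb
  rw [h.extd_eq]
  ext u v
  simp only [covWedge_apply, Pi.add_apply, Pi.sub_apply, Pi.smul_apply, Pi.zero_apply, add_apply,
    sub_apply, smul_apply, zero_apply, smul_eq_mul, nsmul_eq_mul, conn₃, conn₄, conn₅, conn₇, θ₂,
    θ₃_eq hα ha, θ₄_eq hα ha, θ₅_eq hα ha, K_eq hα ha, pow_four_eq_S_pow hα, sq_eq_S_pow hα]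
  push_cast
  field_simp
  ring

end StructureEquations

theorem monge_coframing_satisfies_cartan_structure_equations
    (α : ℝ) (hα : 1 < α) :
    ∃ Ω₁ Ω₂ Ω₃ Ω₄ Ω₅ Ω₆ Ω₇ : (Fin 5 → ℝ) → ((Fin 5 → ℝ) →L[ℝ] ℝ),
      ContDiffOn ℝ (⊤ : ℕ∞) Ω₁ U ∧ ContDiffOn ℝ (⊤ : ℕ∞) Ω₂ U ∧ ContDiffOn ℝ (⊤ : ℕ∞) Ω₃ U ∧
      ContDiffOn ℝ (⊤ : ℕ∞) Ω₄ U ∧ ContDiffOn ℝ (⊤ : ℕ∞) Ω₅ U ∧ ContDiffOn ℝ (⊤ : ℕ∞) Ω₆ U ∧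
      ContDiffOn ℝ (⊤ : ℕ∞) Ω₇ U ∧
      ∀ a ∈ U, ∀ u v : Fin 5 → ℝ,
        extd (θ₁ α) a u v =
          wedge (θ₁ α) (fun b => (2:ℝ) • Ω₁ b + Ω₄ b) a u v + wedge θ₂ Ω₂ a u v
          + wedge (θ₃ α) (θ₄ α) a u v ∧
        extd θ₂ a u v =
          wedge (θ₁ α) Ω₃ a u v + wedge θ₂ (fun b => Ω₁ b + (2:ℝ) • Ω₄ b) a u v
          + wedge (θ₃ α) (θ₅ α) a u v ∧
        extd (θ₃ α) a u v =
          wedge (θ₁ α) Ω₅ a u v + wedge θ₂ Ω₆ a u v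
          + wedge (θ₃ α) (fun b => Ω₁ b + Ω₄ b) a u v
          + wedge (θ₄ α) (θ₅ α) a u v ∧
        extd (θ₄ α) a u v =
          wedge (θ₁ α) Ω₇ a u v + (4/3) * wedge (θ₃ α) Ω₆ a u v
          + wedge (θ₄ α) Ω₁ a u v + wedge (θ₅ α) Ω₂ a u v ∧
        extd (θ₅ α) a u v =
          wedge θ₂ Ω₇ a u v - (4/3) * wedge (θ₃ α) Ω₅ a u v
          + wedge (θ₄ α) Ω₃ a u v + wedge (θ₅ α) Ω₄ a u v := by
  have hα2 : 1 < α ^ 2 := one_lt_pow₀ hα two_ne_zero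
  refine ⟨conn₁ α, conn₂ α, conn₃, conn₄ α, conn₅ α, conn₆ α, conn₇ α, contDiffOn_conn₁ hα2,
    contDiffOn_conn₂ hα2, contDiffOn_const, contDiffOn_conn₄ hα2, contDiffOn_conn₅ hα2,
    contDiffOn_conn₆ hα2, contDiffOn_conn₇ hα2, fun a ha u v => ⟨?_, ?_, ?_, ?_, ?_⟩⟩
  · exact congrFun₂ (extd_θ₁ hα2 ha) u v
  · exact congrFun₂ (extd_θ₂ hα2 ha) u v
  · exact congrFun₂ (extd_θ₃ hα2 ha) u v
  · exact congrFun₂ (extd_θ₄ hα2 ha) u v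
  · exact congrFun₂ (extd_θ₅ hα2 ha) u v

end
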